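/- (Composition preserves totality) Let bl-graphs G and H be total with respect to the sharing-free named sequents ⊢Γ,A and ⊢Γ,Ā respectively. Then the composite G ⊙_A H is total with respect to the sequent ⊢Γ. -/

import Mathlib

open scoped Classical

noncomputable section

namespace GS4

/-- Named classical propositional formulas over atoms `α`, with names in `ℕ`. -/
inductive NForm (α : Type) : Type
  | atom : ℕ → α → NForm α
  | or   : NForm α → NForm α → NForm α
  | and  : NForm α → NForm α → NForm α

variable {α : Type}

/-- Name-preserving De Morgan negation, w.r.t. an involution `bar` on atoms. -/
def negF (bar : α → α) : NForm α → NForm α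
  | .atom x a => .atom x (bar a)
  | .or A B => .and (negF bar A) (negF bar B)
  | .and A B => .or (negF bar A) (negF bar B)

/-- The set of names occurring in a named formula. -/
def NForm.names : NForm α → Set ℕ
  | .atom x _ => {x}
  | .or A B => A.names ∪ B.names
  | .and A B => A.names ∪ B.names

/-- A named formula is sharing-free if every name occurs at most once in it. -/
def NForm.sharingFree : NForm α → Prop
  | .atom _ _ => True
  | .or A B => A.sharingFree ∧ B.sharingFree ∧ Disjoint A.names B.names
  | .and A B => A.sharingFree ∧ B.sharingFree ∧ Disjoint A.names B.names

def NForm.isAtom : NForm α → Prop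
  | .atom _ _ => True
  | _ => False

/-- Anonymous formulas (shapes): `A ≡ B` iff their shapes coincide. -/
inductive Shape (α : Type) : Type
  | atom : α → Shape α
  | or   : Shape α → Shape α → Shape α
  | and  : Shape α → Shape α → Shape α

def NForm.shape : NForm α → Shape α
  | .atom _ a => .atom a
  | .or A B => .or A.shape B.shape
  | .and A B => .and A.shape B.shape

/-- `HasAtom A x a`: the atomic formula `x:a` occurs in `A`. -/
def HasAtom : NForm α → ℕ → α → Prop
  | .atom y b, x, a => y = x ∧ b = a
  | .or A B, x, a => HasAtom A x a ∨ HasAtom B x a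
  | .and A B, x, a => HasAtom A x a ∨ HasAtom B x a

/-- Names of a finite set of named formulas. -/
def snames (Γ : Finset (NForm α)) : Set ℕ := ⋃ A ∈ Γ, A.names

/-- A finite set of named formulas is sharing-free if all its elements are
sharing-free with pairwise disjoint name sets. -/
def SFSet (Γ : Finset (NForm α)) : Prop :=
  (∀ A ∈ Γ, A.sharingFree) ∧
  ∀ A ∈ Γ, ∀ B ∈ Γ, A ≠ B → Disjoint A.names B.names

/-- `x:a` occurs in some formula of `Γ` (i.e. `Γ[x] = a` for sharing-free `Γ`). -/
def HasAtomS (Γ : Finset (NForm α)) (x : ℕ) (a : α) : Prop :=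
  ∃ A ∈ Γ, HasAtom A x a

/-- Branch sets of named formulas. -/
def BrF : NForm α → Set (Set ℕ)
  | .atom x _ => {{x}}
  | .or A B => {X | ∃ Y ∈ BrF A, ∃ Z ∈ BrF B, X = Y ∪ Z}
  | .and A B => BrF A ∪ BrF B

/-- Branch sets of sequents (finite sharing-free sets of named formulas). -/
def BrS (Γ : Finset (NForm α)) : Set (Set ℕ) :=
  {X | X ⊆ snames Γ ∧ ∀ A ∈ Γ, X ∩ A.names ∈ BrF A}

/-! ## Branch-labeled name graphs -/

/-- A branch-labeled name graph: vertices and a relation between unordered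
pairs of vertices and branch labels. -/
structure BLGraph : Type where
  verts : Set ℕ
  rel : Sym2 ℕ → Set ℕ → Prop

/-- Well-formedness of a bl-graph: related pairs consist of distinct vertices,
labels are sets of vertices, and each edge is included in its labels. -/
def BLGraph.IsBL (G : BLGraph) : Prop :=
  ∀ e X, G.rel e X → ¬ e.IsDiag ∧ X ⊆ G.verts ∧ ∀ v ∈ e, v ∈ X

def BLGraph.Edges (G : BLGraph) : Set (Sym2 ℕ) := {e | ∃ X, G.rel e X}

def BLGraph.Br (G : BLGraph) : Set (Set ℕ) := {X | ∃ e, G.rel e X}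

def BLGraph.union (G H : BLGraph) : BLGraph :=
  ⟨G.verts ∪ H.verts, fun e X => G.rel e X ∨ H.rel e X⟩

/-- Restriction `G↾_S` of a bl-graph. -/
def BLGraph.restrict (G : BLGraph) (S : Set ℕ) : BLGraph :=
  ⟨G.verts ∩ S, fun e X => G.rel e X ∧ X ⊆ S⟩

/-- The interface-relativized edge-branch relation `e ⊰^I_G X`. -/
def BLGraph.relI (G : BLGraph) (I : Set ℕ) (e : Sym2 ℕ) (X : Set ℕ) : Prop :=
  ∃ Y, G.rel e Y ∧ X = Y \ I

/-- `z 0, …, z (n-1)` is an `X`-labeled alternating path between `G` and `H`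
through the interface `I`. -/
def AltPath (G H : BLGraph) (I X : Set ℕ) (n : ℕ) (z : ℕ → ℕ) : Prop :=
  1 < n ∧
  (∀ i < n, ∀ j < n, z i = z j → i = j) ∧
  (∀ i, 0 < i → i + 1 < n → z i ∈ I) ∧
  ((∀ i, i + 1 < n →
      (Even i → G.relI I s(z i, z (i + 1)) X) ∧ (¬ Even i → H.relI I s(z i, z (i + 1)) X)) ∨
   (∀ i, i + 1 < n →
      (Even i → H.relI I s(z i, z (i + 1)) X) ∧ (¬ Even i → G.relI I s(z i, z (i + 1)) X)))

/-- Composition of bl-graphs over an interface `I`. -/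
def BLGraph.comp (G H : BLGraph) (I : Set ℕ) : BLGraph :=
  ⟨(G.verts ∪ H.verts) \ I,
   fun e X => ∃ n z, AltPath G H I X n z ∧ z 0 ∉ I ∧ z (n - 1) ∉ I ∧
     e = s(z 0, z (n - 1))⟩

/-- The weakening operator on bl-graphs: add vertices `V` and extend every
branch label by a member of `Brs`. -/
def blwk (V : Set ℕ) (Brs : Set (Set ℕ)) (G : BLGraph) : BLGraph :=
  ⟨G.verts ∪ V, fun e X => ∃ Y Z, G.rel e Y ∧ Z ∈ Brs ∧ X = Y ∪ Z⟩

/-- The bl-identity graph `id_{A,C}` on a pair of dual formulas. -/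
def blid : NForm α → NForm α → BLGraph
  | .atom x _, .atom y _ => ⟨{x, y}, fun e X => e = s(x, y) ∧ X = {x, y}⟩
  | .or A1 A2, .and C1 C2 =>
      (blwk A2.names (BrF A2) (blid A1 C1)).union (blwk A1.names (BrF A1) (blid A2 C2))
  | .and A1 A2, .or C1 C2 =>
      (blwk C2.names (BrF C2) (blid A1 C1)).union (blwk C1.names (BrF C1) (blid A2 C2))
  | _, _ => ⟨∅, fun _ _ => False⟩

/-! ## Simple name graphs -/

/-- A simple name graph. -/
structure NGraph : Type where
  verts : Set ℕ
  edges : Set (Sym2 ℕ)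

/-- Subgraph relation `H ⊑ G`. -/
def NGraph.Sub (H G : NGraph) : Prop := H.verts ⊆ G.verts ∧ H.edges ⊆ G.edges

def NGraph.union (G H : NGraph) : NGraph := ⟨G.verts ∪ H.verts, G.edges ∪ H.edges⟩

/-- Induced subgraph `G↾_S`. -/
def NGraph.restrict (G : NGraph) (S : Set ℕ) : NGraph :=
  ⟨G.verts ∩ S, {e ∈ G.edges | ∀ v ∈ e, v ∈ S}⟩

/-- Alternating paths between simple name graphs through an interface. -/
def NAltPath (G H : NGraph) (I : Set ℕ) (n : ℕ) (z : ℕ → ℕ) : Prop :=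
  0 < n ∧
  (∀ i < n, ∀ j < n, z i = z j → i = j) ∧
  (∀ i, 0 < i → i + 1 < n → z i ∈ I) ∧
  ((∀ i, i + 1 < n →
      (Even i → s(z i, z (i + 1)) ∈ G.edges) ∧ (¬ Even i → s(z i, z (i + 1)) ∈ H.edges)) ∨
   (∀ i, i + 1 < n →
      (Even i → s(z i, z (i + 1)) ∈ H.edges) ∧ (¬ Even i → s(z i, z (i + 1)) ∈ G.edges)))

/-- Composition of simple name graphs over an interface. -/
def NGraph.comp (G H : NGraph) (I : Set ℕ) : NGraph :=
  ⟨(G.verts ∪ H.verts) \ I,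
   {e | ∃ x y, x ≠ y ∧ x ∈ (G.verts ∪ H.verts) \ I ∧ y ∈ (G.verts ∪ H.verts) \ I ∧
        e = s(x, y) ∧ ∃ n z, NAltPath G H I n z ∧ z 0 = x ∧ z (n - 1) = y}⟩

/-- The identity graph `Id_{A,C}` on a pair of dual formulas. -/
def idg : NForm α → NForm α → NGraph
  | .atom x _, .atom y _ => ⟨{x, y}, {s(x, y)}⟩
  | .or A1 A2, .and C1 C2 => (idg A1 C1).union (idg A2 C2)
  | .and A1 A2, .or C1 C2 => (idg A1 C1).union (idg A2 C2)
  | _, _ => ⟨∅, ∅⟩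

/-- The edgeless (weakening) graph on the names of `Γ`. -/
def wkg (Γ : Finset (NForm α)) : NGraph := ⟨snames Γ, ∅⟩

/-! ## Named GS4 derivations -/

/-- Named GS4 derivation trees. -/
inductive Deriv (α : Type) : Type
  | ax (Γ : Finset (NForm α)) (A C : NForm α)
  | cut (A : NForm α) (P Q : Deriv α)
  | sup (P Q : Deriv α)
  | orI (A B : NForm α) (P : Deriv α)
  | andI (A B : NForm α) (P Q : Deriv α)

/-- Conclusion of a derivation tree. -/
def concl : Deriv α → Finset (NForm α)
  | .ax Γ A C => insert A (insert C Γ)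
  | .cut A P _ => (concl P).erase A
  | .sup P _ => concl P
  | .orI A B P => insert (NForm.or A B) (((concl P).erase A).erase B)
  | .andI A B P _ => insert (NForm.and A B) ((concl P).erase A)

/-- Well-formedness of derivation trees w.r.t. the atom involution `bar`:
each rule is applied correctly to sharing-free named sequents. -/
def WF (bar : α → α) : Deriv α → Prop
  | .ax Γ A C =>
      A.shape = (negF bar C).shape ∧
      A.sharingFree ∧ C.sharingFree ∧ SFSet Γ ∧
      Disjoint A.names C.names ∧
      Disjoint A.names (snames Γ) ∧ Disjoint C.names (snames Γ)
  | .cut A P Q =>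
      WF bar P ∧ WF bar Q ∧
      ∃ Γ : Finset (NForm α), A ∉ Γ ∧ negF bar A ∉ Γ ∧
        concl P = insert A Γ ∧ concl Q = insert (negF bar A) Γ ∧
        A.sharingFree ∧ SFSet Γ ∧ Disjoint A.names (snames Γ)
  | .sup P Q => WF bar P ∧ WF bar Q ∧ concl P = concl Q
  | .orI A B P =>
      WF bar P ∧
      ∃ Γ : Finset (NForm α), A ∉ Γ ∧ B ∉ Γ ∧ A ≠ B ∧
        concl P = insert A (insert B Γ) ∧
        A.sharingFree ∧ B.sharingFree ∧ SFSet Γ ∧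
        Disjoint A.names B.names ∧
        Disjoint A.names (snames Γ) ∧ Disjoint B.names (snames Γ)
  | .andI A B P Q =>
      WF bar P ∧ WF bar Q ∧
      ∃ Γ : Finset (NForm α), A ∉ Γ ∧ B ∉ Γ ∧
        concl P = insert A Γ ∧ concl Q = insert B Γ ∧
        A.sharingFree ∧ B.sharingFree ∧ SFSet Γ ∧
        Disjoint A.names B.names ∧
        Disjoint A.names (snames Γ) ∧ Disjoint B.names (snames Γ)

/-- A derivation is cut-free if it contains no cut rule. -/
def CutFree : Deriv α → Prop
  | .ax _ _ _ => True
  | .cut _ _ _ => False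
  | .sup P Q => CutFree P ∧ CutFree Q
  | .orI _ _ P => CutFree P
  | .andI _ _ P Q => CutFree P ∧ CutFree Q

/-- The branch-labeled axiom graph `⟨⟨P⟩⟩` of a derivation. -/
def blaxg : Deriv α → BLGraph
  | .ax Γ A C => blwk (snames Γ) (BrS Γ) (blid A C)
  | .cut A P Q => BLGraph.comp (blaxg P) (blaxg Q) A.names
  | .sup P Q => (blaxg P).union (blaxg Q)
  | .orI _ _ P => blaxg P
  | .andI _ _ P Q => (blaxg P).union (blaxg Q)

/-- The (simple) axiom graph `⟦P⟧` of a derivation. -/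
def axg : Deriv α → NGraph
  | .ax Γ A C => (wkg Γ).union (idg A C)
  | .cut A P Q => NGraph.comp (axg P) (axg Q) A.names
  | .sup P Q => (axg P).union (axg Q)
  | .orI _ _ P => axg P
  | .andI _ _ P Q => (axg P).union (axg Q)

/-! ## Inversion and isolation -/

/-- Inversion of a disjunction `D ∨ E` in the conclusion. -/
def inv (D E : NForm α) : Deriv α → Deriv α
  | .ax Γ A C =>
      if A = NForm.or D E then
        match C with
        | .and C1 C2 =>
            .andI C1 C2 (.ax (insert E Γ) D C1) (.ax (insert D Γ) E C2)
        | _ => .ax Γ A C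
      else if C = NForm.or D E then
        match A with
        | .and A1 A2 =>
            .andI A1 A2 (.ax (insert E Γ) A1 D) (.ax (insert D Γ) A2 E)
        | _ => .ax Γ A C
      else
        .ax (insert D (insert E (Γ.erase (NForm.or D E)))) A C
  | .cut A P Q => .cut A (inv D E P) (inv D E Q)
  | .sup P Q => .sup (inv D E P) (inv D E Q)
  | .orI A B P => if A = D ∧ B = E then P else .orI A B (inv D E P)
  | .andI A B P Q => .andI A B (inv D E P) (inv D E Q)

/-- Left inversion of a conjunction `D ∧ E` in the conclusion. -/
def invl (D E : NForm α) : Deriv α → Deriv α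
  | .ax Γ A C =>
      if A = NForm.and D E then
        match C with
        | .or C1 C2 => .orI C1 C2 (.ax (insert C2 Γ) D C1)
        | _ => .ax Γ A C
      else if C = NForm.and D E then
        match A with
        | .or A1 A2 => .orI A1 A2 (.ax (insert A2 Γ) A1 D)
        | _ => .ax Γ A C
      else
        .ax (insert D (Γ.erase (NForm.and D E))) A C
  | .cut A P Q => .cut A (invl D E P) (invl D E Q)
  | .sup P Q => .sup (invl D E P) (invl D E Q)
  | .orI A B P => .orI A B (invl D E P)
  | .andI A B P Q => if A = D ∧ B = E then P else .andI A B (invl D E P) (invl D E Q)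

/-- Right inversion of a conjunction `D ∧ E` in the conclusion. -/
def invr (D E : NForm α) : Deriv α → Deriv α
  | .ax Γ A C =>
      if A = NForm.and D E then
        match C with
        | .or C1 C2 => .orI C1 C2 (.ax (insert C1 Γ) E C2)
        | _ => .ax Γ A C
      else if C = NForm.and D E then
        match A with
        | .or A1 A2 => .orI A1 A2 (.ax (insert A1 Γ) A2 E)
        | _ => .ax Γ A C
      else
        .ax (insert E (Γ.erase (NForm.and D E))) A C
  | .cut A P Q => .cut A (invr D E P) (invr D E Q)
  | .sup P Q => .sup (invr D E P) (invr D E Q)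
  | .orI A B P => .orI A B (invr D E P)
  | .andI A B P Q => if A = D ∧ B = E then Q else .andI A B (invr D E P) (invr D E Q)

/-- Isolation of a non-atomic formula in the conclusion. -/
def isl : NForm α → Deriv α → Deriv α
  | .or A B, P => .orI A B (inv A B P)
  | .and A B, P => .andI A B (invl A B P) (invr A B P)
  | .atom _ _, P => P

/-- Totality of a bl-graph w.r.t. a sharing-free named sequent. -/
def Total (bar : α → α) (G : BLGraph) (Γ : Finset (NForm α)) : Prop :=
  G.verts = snames Γ ∧
  G.Br = BrS Γ ∧
  ∀ x y : ℕ, s(x, y) ∈ G.Edges →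
    ∀ a b : α, HasAtomS Γ x a → HasAtomS Γ y b → a = bar b

end GS4

namespace GS4

variable {α : Type}

/-! ## Formulas and branches -/

theorem names_negF (bar : α → α) (A : NForm α) : (negF bar A).names = A.names := by
  induction A with
  | atom x a => rfl
  | or A B ihA ihB => simp [negF, NForm.names, ihA, ihB]
  | and A B ihA ihB => simp [negF, NForm.names, ihA, ihB]

theorem sharingFree_negF (bar : α → α) {A : NForm α} (hA : A.sharingFree) :
    (negF bar A).sharingFree := by
  induction A with
  | atom x a => trivial
  | or A B ihA ihB =>
    exact ⟨ihA hA.1, ihB hA.2.1, by simpa only [names_negF] using hA.2.2⟩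
  | and A B ihA ihB =>
    exact ⟨ihA hA.1, ihB hA.2.1, by simpa only [names_negF] using hA.2.2⟩

theorem HasAtom.mem_names {A : NForm α} {x : ℕ} {a : α} (h : HasAtom A x a) : x ∈ A.names := by
  induction A with
  | atom y b => exact h.1.symm
  | or A B ihA ihB => exact h.imp ihA ihB
  | and A B ihA ihB => exact h.imp ihA ihB

theorem exists_hasAtom {A : NForm α} {x : ℕ} (h : x ∈ A.names) : ∃ a, HasAtom A x a := by
  induction A with
  | atom y b => exact ⟨b, h.symm, rfl⟩
  | or A B ihA ihB =>
    exact h.elim (fun h => (ihA h).imp fun _ => Or.inl) (fun h => (ihB h).imp fun _ => Or.inr)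
  | and A B ihA ihB =>
    exact h.elim (fun h => (ihA h).imp fun _ => Or.inl) (fun h => (ihB h).imp fun _ => Or.inr)

theorem NForm.nonempty_atoms (A : NForm α) : Nonempty α := by
  induction A with
  | atom x a => exact ⟨a⟩
  | or A B ihA ihB => exact ihA
  | and A B ihA ihB => exact ihA

theorem HasAtom.unique {A : NForm α} (hA : A.sharingFree) {x : ℕ} {a b : α}
    (ha : HasAtom A x a) (hb : HasAtom A x b) : a = b := by
  induction A with
  | atom y c => exact ha.2.symm.trans hb.2
  | or A B ihA ihB | and A B ihA ihB =>
    obtain ⟨hA, hB, hd⟩ := hA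
    rcases ha with ha | ha <;> rcases hb with hb | hb
    · exact ihA hA ha hb
    · exact (Set.disjoint_left.1 hd ha.mem_names hb.mem_names).elim
    · exact (Set.disjoint_left.1 hd hb.mem_names ha.mem_names).elim
    · exact ihB hB ha hb

theorem HasAtom.negF {A : NForm α} {x : ℕ} {a : α} (bar : α → α) (h : HasAtom A x a) :
    HasAtom (negF bar A) x (bar a) := by
  induction A with
  | atom y c => exact ⟨h.1, congrArg bar h.2⟩
  | or A B ihA ihB => exact h.imp ihA ihB
  | and A B ihA ihB => exact h.imp ihA ihB

theorem subset_names_of_mem_BrF {A : NForm α} {X : Set ℕ} (h : X ∈ BrF A) : X ⊆ A.names := by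
  induction A generalizing X with
  | atom y c => exact (Set.mem_singleton_iff.1 h).subset
  | or A B ihA ihB =>
    obtain ⟨Y, hY, Z, hZ, rfl⟩ := h
    exact Set.union_subset_union (ihA hY) (ihB hZ)
  | and A B ihA ihB =>
    exact h.elim (fun h => (ihA h).trans Set.subset_union_left)
      (fun h => (ihB h).trans Set.subset_union_right)

/-- Any set of names contains a branch of `A`, or its complement contains a branch of the
negation of `A`. -/
theorem exists_branch_subset_or_compl (bar : α → α) (A : NForm α) (S : Set ℕ) :
    (∃ Y ∈ BrF A, Y ⊆ S) ∨ ∃ Z ∈ BrF (negF bar A), Z ⊆ Sᶜ := by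
  induction A with
  | atom x a => simpa [BrF, negF] using em (x ∈ S)
  | or A B ihA ihB =>
    rcases ihA with ⟨Y, hY, hYS⟩ | ⟨Z, hZ, hZS⟩
    · rcases ihB with ⟨Y', hY', hYS'⟩ | ⟨Z, hZ, hZS⟩
      · exact .inl ⟨_, ⟨Y, hY, Y', hY', rfl⟩, Set.union_subset hYS hYS'⟩
      · exact .inr ⟨Z, .inr hZ, hZS⟩
    · exact .inr ⟨Z, .inl hZ, hZS⟩
  | and A B ihA ihB =>
    rcases ihA with ⟨Y, hY, hYS⟩ | ⟨Z, hZ, hZS⟩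
    · exact .inl ⟨Y, .inl hY, hYS⟩
    · rcases ihB with ⟨Y', hY', hYS'⟩ | ⟨Z', hZ', hZS'⟩
      · exact .inl ⟨Y', .inr hY', hYS'⟩
      · exact .inr ⟨_, ⟨Z, hZ, Z', hZ', rfl⟩, Set.union_subset hZS hZS'⟩

/-! ## Sequents -/

theorem snames_insert (A : NForm α) (Γ : Finset (NForm α)) :
    snames (insert A Γ) = A.names ∪ snames Γ := by
  simp [snames]

theorem names_subset_snames {B : NForm α} {Γ : Finset (NForm α)} (hB : B ∈ Γ) :
    B.names ⊆ snames Γ :=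
  Set.subset_biUnion_of_mem (u := fun A : NForm α => A.names) hB

theorem SFSet.insert {A : NForm α} {Γ : Finset (NForm α)} (hΓ : SFSet Γ) (hA : A.sharingFree)
    (hd : Disjoint A.names (snames Γ)) : SFSet (insert A Γ) := by
  refine ⟨fun B hB => ?_, fun B hB C hC hne => ?_⟩
  · rcases Finset.mem_insert.1 hB with rfl | hB
    exacts [hA, hΓ.1 B hB]
  · rcases Finset.mem_insert.1 hB with hBA | hB <;> rcases Finset.mem_insert.1 hC with hCA | hC
    · exact (hne (hBA.trans hCA.symm)).elim
    · exact hBA ▸ hd.mono_right (names_subset_snames hC)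
    · exact hCA ▸ (hd.mono_right (names_subset_snames hB)).symm
    · exact hΓ.2 B hB C hC hne

theorem HasAtomS.unique {Γ : Finset (NForm α)} (hΓ : SFSet Γ) {x : ℕ} {a b : α}
    (ha : HasAtomS Γ x a) (hb : HasAtomS Γ x b) : a = b := by
  obtain ⟨A, hA, ha⟩ := ha
  obtain ⟨B, hB, hb⟩ := hb
  by_cases hAB : A = B
  · subst hAB
    exact ha.unique (hΓ.1 A hA) hb
  · exact (Set.disjoint_left.1 (hΓ.2 A hA B hB hAB) ha.mem_names hb.mem_names).elim

theorem exists_hasAtomS {Γ : Finset (NForm α)} {x : ℕ} (h : x ∈ snames Γ) :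
    ∃ a, HasAtomS Γ x a := by
  obtain ⟨A, hA, hx⟩ := Set.mem_iUnion₂.1 h
  exact (exists_hasAtom hx).imp fun a ha => ⟨A, hA, ha⟩

theorem HasAtomS.insert {Γ : Finset (NForm α)} {x : ℕ} {a : α} (A : NForm α)
    (h : HasAtomS Γ x a) : HasAtomS (insert A Γ) x a :=
  h.imp fun _ hB => ⟨Finset.mem_insert_of_mem hB.1, hB.2⟩

theorem diff_names_mem_BrS {A : NForm α} {Γ : Finset (NForm α)}
    (hd : Disjoint A.names (snames Γ)) {Y : Set ℕ} (hY : Y ∈ BrS (insert A Γ)) :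
    Y \ A.names ∈ BrS Γ := by
  refine ⟨?_, fun B hB => ?_⟩
  · rw [Set.sdiff_subset_iff, ← snames_insert]
    exact hY.1
  · have hdB := hd.mono_right (names_subset_snames hB)
    have : Y \ A.names ∩ B.names = Y ∩ B.names := by
      rw [Set.inter_comm, ← Set.inter_sdiff_assoc, Set.inter_comm,
        (hdB.symm.mono_left Set.inter_subset_right).sdiff_eq_left]
    rw [this]
    exact hY.2 B (Finset.mem_insert_of_mem hB)

theorem union_mem_BrS_insert {A : NForm α} {Γ : Finset (NForm α)}
    (hd : Disjoint A.names (snames Γ)) {X Y : Set ℕ} (hX : X ∈ BrS Γ) (hY : Y ∈ BrF A) :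
    X ∪ Y ∈ BrS (insert A Γ) := by
  have hYA := subset_names_of_mem_BrF hY
  refine ⟨?_, fun B hB => ?_⟩
  · rw [snames_insert, Set.union_comm]
    exact Set.union_subset_union hYA hX.1
  · rcases Finset.mem_insert.1 hB with rfl | hB
    · rwa [Set.union_inter_distrib_right, (hd.symm.mono_left hX.1).inter_eq, Set.empty_union,
        Set.inter_eq_left.2 hYA]
    · rw [Set.union_inter_distrib_right,
        (hd.mono hYA (names_subset_snames hB)).inter_eq, Set.union_empty]
      exact hX.2 B hB

theorem Total.exists_relI {bar : α → α} {A : NForm α} {Γ : Finset (NForm α)} {G : BLGraph}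
    (hG : G.IsBL) (ht : Total bar G (insert A Γ)) (hd : Disjoint A.names (snames Γ))
    {X Y : Set ℕ} (hX : X ∈ BrS Γ) (hY : Y ∈ BrF A) :
    ∃ x y, G.relI A.names s(x, y) X ∧ (x ∈ A.names → x ∈ Y) ∧ (y ∈ A.names → y ∈ Y) := by
  have hXA : Disjoint X A.names := hd.symm.mono_left hX.1
  have hXY : X ∪ Y ∈ G.Br := ht.2.1 ▸ union_mem_BrS_insert hd hX hY
  obtain ⟨e, he⟩ := hXY
  induction e with
  | h x y =>
    obtain ⟨-, -, hmem⟩ := hG _ _ he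
    have hmemY : ∀ v ∈ s(x, y), v ∈ A.names → v ∈ Y := fun v hv hvA =>
      (hmem v hv).resolve_left fun h => Set.disjoint_left.1 hXA h hvA
    refine ⟨x, y, ⟨_, he, ?_⟩, hmemY x (by simp), hmemY y (by simp)⟩
    rw [Set.union_sdiff_distrib, hXA.sdiff_eq_left,
      Set.sdiff_eq_empty.2 (subset_names_of_mem_BrF hY), Set.union_empty]

theorem Total.relI_mem_BrS {bar : α → α} {A : NForm α} {Γ : Finset (NForm α)} {G : BLGraph}
    (ht : Total bar G (insert A Γ)) (hd : Disjoint A.names (snames Γ)) {e : Sym2 ℕ} {X : Set ℕ}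
    (h : G.relI A.names e X) : X ∈ BrS Γ := by
  obtain ⟨Y, hY, rfl⟩ := h
  exact diff_names_mem_BrS hd (ht.2.1 ▸ ⟨e, hY⟩)

theorem Total.eq_bar_of_relI {bar : α → α} {Γ : Finset (NForm α)} {G : BLGraph} {I X : Set ℕ}
    (hG : G.IsBL) (ht : Total bar G Γ) {φ : ℕ → α} (hφ : ∀ x ∈ snames Γ, HasAtomS Γ x (φ x))
    {x y : ℕ} (h : G.relI I s(x, y) X) : φ x = bar (φ y) := by
  obtain ⟨Y, hY, -⟩ := h
  obtain ⟨-, hYV, hmem⟩ := hG _ _ hY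
  rw [ht.1] at hYV
  exact ht.2.2 x y ⟨Y, hY⟩ _ _ (hφ x (hYV (hmem x (by simp)))) (hφ y (hYV (hmem y (by simp))))

/-! ## Alternating paths -/

/-- The endpoints of a complete alternating path starting in `G` carry dual atoms, where `φ` and
`ψ` give the atoms of the names in the sequents of `G` and `H`. -/
theorem eq_bar_of_alternating {bar : α → α} (hbar : Function.Involutive bar) {G H : BLGraph}
    {I X : Set ℕ} {φ ψ : ℕ → α}
    (hG : ∀ x y, G.relI I s(x, y) X → φ x = bar (φ y))
    (hH : ∀ x y, H.relI I s(x, y) X → ψ x = bar (ψ y))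
    (hI : ∀ x ∈ I, ψ x = bar (φ x)) (hI' : ∀ x ∉ I, ψ x = φ x) {n : ℕ} {z : ℕ → ℕ}
    (hn : 1 < n) (hint : ∀ i, 0 < i → i + 1 < n → z i ∈ I)
    (halt : ∀ i, i + 1 < n →
      (Even i → G.relI I s(z i, z (i + 1)) X) ∧ (¬ Even i → H.relI I s(z i, z (i + 1)) X))
    (hlast : z (n - 1) ∉ I) : φ (z 0) = bar (φ (z (n - 1))) := by
  have key : ∀ i, i + 1 < n →
      (Even i → φ (z 0) = bar (φ (z (i + 1)))) ∧ (¬ Even i → φ (z 0) = bar (ψ (z (i + 1)))) := by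
    intro i
    induction i with
    | zero => exact fun h => ⟨fun _ => hG _ _ ((halt 0 h).1 Even.zero), fun h => (h Even.zero).elim⟩
    | succ i ih =>
      intro h
      have hzI := hI _ (hint (i + 1) i.succ_pos h)
      have ih := ih (by omega)
      rw [Nat.even_add_one, not_not]
      refine ⟨fun hi => ?_, fun hi => ?_⟩
      · have h1 := hG _ _ ((halt (i + 1) h).1 (Nat.even_add_one.2 hi))
        rw [ih.2 hi, hzI, hbar, h1]
      · have h1 := hH _ _ ((halt (i + 1) h).2 (by simpa [Nat.even_add_one] using hi))
        rw [ih.1 hi, ← hzI, h1]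
  obtain ⟨m, rfl⟩ : ∃ m, n = m + 2 := ⟨n - 2, by omega⟩
  have hk := key m (by omega)
  simp only [Nat.add_succ_sub_one] at hlast ⊢
  rw [hI' _ hlast] at hk
  exact (em (Even m)).elim hk.1 hk.2

/-- A shortest chain between two sets of vertices repeats no vertex. -/
theorem exists_injective_chain {D : ℕ → ℕ → Prop} {P Q : ℕ → Prop} {x y : ℕ} (hx : P x) (hy : Q y)
    (h : Relation.ReflTransGen D x y) :
    ∃ (n : ℕ) (z : ℕ → ℕ), P (z 0) ∧ Q (z n) ∧ (∀ i < n, D (z i) (z (i + 1))) ∧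
      ∀ i ≤ n, ∀ j ≤ n, z i = z j → i = j := by
  let R : ℕ → Prop := fun n => ∃ z : ℕ → ℕ, P (z 0) ∧ Q (z n) ∧ ∀ i < n, D (z i) (z (i + 1))
  have hR : ∃ n, R n := by
    induction h using Relation.ReflTransGen.head_induction_on generalizing P with
    | refl => exact ⟨0, fun _ => y, hx, hy, fun i hi => absurd hi (by omega)⟩
    | @head a b hab _ ih =>
      obtain ⟨n, z, h0, hn, hz⟩ := ih (P := (· = b)) rfl
      refine ⟨n + 1, fun i => Nat.casesOn i a z, hx, hn, fun i hi => ?_⟩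
      cases i with
      | zero =>
        subst h0
        exact hab
      | succ i => exact hz i (by omega)
  obtain ⟨z, h0, hn, hz⟩ := Nat.find_spec hR
  have hmin : ∀ m < Nat.find hR, ¬ R m := fun m hm => Nat.find_min hR hm
  generalize Nat.find hR = n at hn hz hmin
  have hlt : ∀ i j, i < j → j ≤ n → z i ≠ z j := by
    intro i j hij hj heq
    refine hmin (n - (j - i)) (by omega)
      ⟨fun k => if k ≤ i then z k else z (k + (j - i)), by simpa using h0, ?_, fun k hk => ?_⟩
    · by_cases hjn : j = n
      · subst hjn
        simpa [show j - (j - i) = i by omega, heq] using hn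
      · have h1 : ¬ n - (j - i) ≤ i := by omega
        have h2 : n - (j - i) + (j - i) = n := by omega
        simpa only [if_neg h1, h2] using hn
    · rcases lt_trichotomy k i with hki | rfl | hki
      · simpa only [if_pos hki.le, if_pos (show k + 1 ≤ i by omega)] using hz k (by omega)
      · have h2 : k + 1 + (j - k) = j + 1 := by omega
        simpa only [if_pos le_rfl, if_neg (show ¬ k + 1 ≤ k by omega), h2, heq] using
          hz j (by omega)
      · have h2 : k + 1 + (j - i) = k + (j - i) + 1 := by omega
        simpa only [if_neg (show ¬ k ≤ i by omega), if_neg (show ¬ k + 1 ≤ i by omega), h2] using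
          hz (k + (j - i)) (by omega)
  refine ⟨n, z, h0, hn, hz, fun i hi j hj heq => ?_⟩
  rcases lt_trichotomy i j with hij | hij | hij
  exacts [(hlt i j hij hj heq).elim, hij, (hlt j i hij hi heq.symm).elim]

/-- If `p` and `q` are polarities that `G`- and `H`-edges reverse, that agree off the interface and
disagree on it, then a complete alternating path exists as soon as every set of names or its
complement in the interface carries a `G`-edge or an `H`-edge, respectively. -/
theorem exists_complete_altPath {G H : BLGraph} {I X : Set ℕ} {p q : ℕ → Prop}
    (hG : ∀ x y, G.relI I s(x, y) X → (p x ↔ ¬ p y))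
    (hH : ∀ x y, H.relI I s(x, y) X → (q x ↔ ¬ q y))
    (hI : ∀ x ∈ I, (q x ↔ ¬ p x)) (hI' : ∀ x ∉ I, (q x ↔ p x))
    (hS : ∀ S : Set ℕ,
      (∃ x y, G.relI I s(x, y) X ∧ (x ∈ I → x ∈ S) ∧ (y ∈ I → y ∈ S)) ∨
      ∃ x y, H.relI I s(x, y) X ∧ (x ∈ I → x ∈ Sᶜ) ∧ (y ∈ I → y ∈ Sᶜ)) :
    ∃ n z, AltPath G H I X n z ∧ z 0 ∉ I ∧ z (n - 1) ∉ I := by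
  let DG : ℕ → ℕ → Prop := fun x y => G.relI I s(x, y) X ∧ p x ∧ ¬ p y
  let DH : ℕ → ℕ → Prop := fun x y => H.relI I s(x, y) X ∧ q x ∧ ¬ q y
  let D : ℕ → ℕ → Prop := fun x y => DG x y ∨ DH x y
  have orient : ∀ (K : BLGraph) (r : ℕ → Prop) (T : Set ℕ),
      (∀ x y, K.relI I s(x, y) X → (r x ↔ ¬ r y)) →
      (∃ x y, K.relI I s(x, y) X ∧ (x ∈ I → x ∈ T) ∧ (y ∈ I → y ∈ T)) →
      ∃ x y, (K.relI I s(x, y) X ∧ r x ∧ ¬ r y) ∧ (x ∈ I → x ∈ T) ∧ (y ∈ I → y ∈ T) := by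
    rintro K r T hK ⟨x, y, hxy, hx, hy⟩
    have hr := hK x y hxy
    by_cases hrx : r x
    · exact ⟨x, y, ⟨hxy, hrx, hr.1 hrx⟩, hx, hy⟩
    · exact ⟨y, x, ⟨Sym2.eq_swap ▸ hxy, by tauto, hrx⟩, hy, hx⟩
  obtain ⟨x, y, hx, hy, hxy⟩ : ∃ x y, (x ∉ I ∧ p x) ∧ (y ∉ I ∧ ¬ p y) ∧
      Relation.ReflTransGen D x y := by
    by_contra hno
    let R : ℕ → Prop := fun y => ∃ x, (x ∉ I ∧ p x) ∧ Relation.ReflTransGen D x y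
    have hstep : ∀ x y, R x → D x y → R y :=
      fun x y ⟨w, hw, hwx⟩ hxy => ⟨w, hw, hwx.tail hxy⟩
    have hsource : ∀ x ∉ I, p x → R x := fun x hx hp => ⟨x, ⟨hx, hp⟩, .refl⟩
    have hsink : ∀ y ∉ I, ¬ p y → ¬ R y := fun y hy hp ⟨x, hx, hxy⟩ => hno ⟨x, y, hx, ⟨hy, hp⟩, hxy⟩
    rcases hS {v | p v ↔ R v} with h | h
    · obtain ⟨x, y, hD, hx, hy⟩ := orient G p _ hG h
      have hRx : R x := by
        by_cases hxI : x ∈ I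
        exacts [(hx hxI).1 hD.2.1, hsource x hxI hD.2.1]
      have hRy := hstep x y hRx (.inl hD)
      by_cases hyI : y ∈ I
      exacts [hD.2.2 ((hy hyI).2 hRy), hsink y hyI hD.2.2 hRy]
    · obtain ⟨x, y, hD, hx, hy⟩ := orient H q _ hH h
      have hRx : R x := by
        by_cases hxI : x ∈ I
        · by_contra hR
          exact hx hxI (iff_of_false ((hI x hxI).1 hD.2.1) hR)
        · exact hsource x hxI ((hI' x hxI).1 hD.2.1)
      have hRy := hstep x y hRx (.inr hD)
      by_cases hyI : y ∈ I
      · exact hy hyI (iff_of_true (not_not.1 fun hp => hD.2.2 ((hI y hyI).2 hp)) hRy)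
      · exact hsink y hyI (fun hp => hD.2.2 ((hI' y hyI).2 hp)) hRy
  obtain ⟨n, z, h0, hn, hz, hinj⟩ := exists_injective_chain (P := fun x => x ∉ I ∧ p x)
    (Q := fun y => y ∉ I ∧ ¬ p y) hx hy hxy
  have hn0 : n ≠ 0 := by
    rintro rfl
    exact hn.2 h0.2
  have hint : ∀ i, 0 < i → i < n → z i ∈ I := by
    intro i hi hin
    by_contra hzI
    obtain ⟨j, rfl⟩ : ∃ j, i = j + 1 := ⟨i - 1, by omega⟩
    have hq := hI' _ hzI
    rcases hz j (by omega) with h1 | h1 <;> rcases hz (j + 1) hin with h2 | h2 <;>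
      obtain ⟨-, -, h1⟩ := h1 <;> obtain ⟨-, h2, -⟩ := h2 <;> tauto
  have hGH : ∀ i, i + 1 < n → DG (z i) (z (i + 1)) → DH (z (i + 1)) (z (i + 2)) :=
    fun i hi h => (hz (i + 1) hi).resolve_left fun h' => h.2.2 h'.2.1
  have hHG : ∀ i, i + 1 < n → DH (z i) (z (i + 1)) → DG (z (i + 1)) (z (i + 2)) :=
    fun i hi h => (hz (i + 1) hi).resolve_right fun h' => h.2.2 h'.2.1
  have alternate : ∀ K L : ℕ → ℕ → Prop,
      (∀ i, i + 1 < n → K (z i) (z (i + 1)) → L (z (i + 1)) (z (i + 2))) →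
      (∀ i, i + 1 < n → L (z i) (z (i + 1)) → K (z (i + 1)) (z (i + 2))) →
      K (z 0) (z 1) → ∀ i, i < n →
        (Even i → K (z i) (z (i + 1))) ∧ (¬ Even i → L (z i) (z (i + 1))) := by
    intro K L hKL hLK hK i
    induction i with
    | zero => exact fun _ => ⟨fun _ => hK, fun h => (h Even.zero).elim⟩
    | succ i ih =>
      intro hi
      have ih := ih (by omega)
      rw [Nat.even_add_one, not_not]
      exact ⟨fun h => hLK i hi (ih.2 h), fun h => hKL i hi (ih.1 h)⟩
  refine ⟨n + 1, z, ⟨by omega, fun i hi j hj => hinj i (by omega) j (by omega),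
    fun i hi hin => hint i hi (by omega), ?_⟩, h0.1, hn.1⟩
  rcases hz 0 (by omega) with h | h
  · refine .inl fun i hi => ?_
    have := alternate DG DH hGH hHG h i (by omega)
    exact ⟨fun h => (this.1 h).1, fun h => (this.2 h).1⟩
  · refine .inr fun i hi => ?_
    have := alternate DH DG hHG hGH h i (by omega)
    exact ⟨fun h => (this.1 h).1, fun h => (this.2 h).1⟩

/-- A fixpoint-free involution admits a choice of one element from each orbit. -/
theorem exists_polarity {bar : α → α} (hbar : Function.Involutive bar)
    (hfix : ∀ a, bar a ≠ a) : ∃ P : α → Prop, ∀ a, P (bar a) ↔ ¬ P a := by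
  refine ⟨fun a => WellOrderingRel a (bar a), fun a => ?_⟩
  simp only [hbar a]
  exact ⟨fun h h' => asymm_of WellOrderingRel h h', fun h =>
    ((trichotomous_of WellOrderingRel a (bar a)).resolve_left h).resolve_left (hfix a).symm⟩

end GS4

/-- composition over a cut-formula preserves totality. -/
theorem GS4.comp_total {α : Type} (bar : α → α)
    (hbar : Function.Involutive bar) (hfix : ∀ a, bar a ≠ a)
    (Γ : Finset (GS4.NForm α)) (A : GS4.NForm α)
    (hΓ : GS4.SFSet Γ) (hA : A.sharingFree)
    (hd : Disjoint A.names (GS4.snames Γ))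
    (hAΓ : A ∉ Γ) (hAΓ' : GS4.negF bar A ∉ Γ)
    (G H : GS4.BLGraph) (hG : G.IsBL) (hH : H.IsBL)
    (htG : GS4.Total bar G (insert A Γ))
    (htH : GS4.Total bar H (insert (GS4.negF bar A) Γ)) :
    GS4.Total bar (G.comp H A.names) Γ := by
  have hnames : (negF bar A).names = A.names := names_negF bar A
  have hd' : Disjoint (negF bar A).names (snames Γ) := hnames ▸ hd
  have hsf : SFSet (insert A Γ) := hΓ.insert hA hd
  have := A.nonempty_atoms
  choose! φ hφ using fun x (hx : x ∈ snames (insert A Γ)) => exists_hasAtomS hx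
  have hφΓ : ∀ x a, HasAtomS Γ x a → φ x = a := fun x a ha => by
    obtain ⟨B, hB, hBx⟩ := ha.insert A
    exact (hφ x (names_subset_snames hB hBx.mem_names)).unique hsf ⟨B, hB, hBx⟩
  let ψ : ℕ → α := fun x => if x ∈ A.names then bar (φ x) else φ x
  have hψ_mem : ∀ x ∈ A.names, ψ x = bar (φ x) := fun x hx => if_pos hx
  have hψ_notMem : ∀ x ∉ A.names, ψ x = φ x := fun x hx => if_neg hx
  have hψ : ∀ x ∈ snames (insert (negF bar A) Γ),
      HasAtomS (insert (negF bar A) Γ) x (ψ x) := by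
    intro x hx
    by_cases hxA : x ∈ A.names
    · obtain ⟨a, ha⟩ := exists_hasAtom hxA
      have haφ : φ x = a := (hφ x (names_subset_snames (Finset.mem_insert_self A Γ) hxA)).unique hsf
        ⟨A, Finset.mem_insert_self A Γ, ha⟩
      rw [hψ_mem x hxA, haφ]
      exact ⟨_, Finset.mem_insert_self _ Γ, ha.negF bar⟩
    · rw [snames_insert, hnames] at hx
      obtain ⟨a, ha⟩ := exists_hasAtomS (hx.resolve_left hxA)
      rw [hψ_notMem x hxA, hφΓ x a ha]
      exact ha.insert _
  have hGφ : ∀ X x y, G.relI A.names s(x, y) X → φ x = bar (φ y) :=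
    fun X x y => htG.eq_bar_of_relI hG hφ
  have hHψ : ∀ X x y, H.relI A.names s(x, y) X → ψ x = bar (ψ y) :=
    fun X x y => htH.eq_bar_of_relI hH hψ
  refine ⟨?_, Set.Subset.antisymm ?_ fun X hX => ?_, ?_⟩
  · change (G.verts ∪ H.verts) \ A.names = snames Γ
    rw [htG.1, htH.1, snames_insert, snames_insert, hnames, Set.union_self,
      Set.union_sdiff_left, hd.symm.sdiff_eq_left]
  · rintro X ⟨e, n, z, ⟨hn, -, -, halt⟩, -⟩
    rcases halt with halt | halt
    · exact htG.relI_mem_BrS hd ((halt 0 hn).1 Even.zero)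
    · exact htH.relI_mem_BrS hd' (hnames.symm ▸ (halt 0 hn).1 Even.zero)
  · obtain ⟨P, hP⟩ := exists_polarity hbar hfix
    have hS : ∀ S : Set ℕ,
        (∃ x y, G.relI A.names s(x, y) X ∧ (x ∈ A.names → x ∈ S) ∧ (y ∈ A.names → y ∈ S)) ∨
        ∃ x y, H.relI A.names s(x, y) X ∧ (x ∈ A.names → x ∈ Sᶜ) ∧ (y ∈ A.names → y ∈ Sᶜ) := by
      intro S
      rcases exists_branch_subset_or_compl bar A S with ⟨Y, hY, hYS⟩ | ⟨Z, hZ, hZS⟩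
      · obtain ⟨x, y, hxy, hx, hy⟩ := htG.exists_relI hG hd hX hY
        exact .inl ⟨x, y, hxy, fun h => hYS (hx h), fun h => hYS (hy h)⟩
      · obtain ⟨x, y, hxy, hx, hy⟩ := htH.exists_relI hH hd' hX hZ
        rw [hnames] at hxy hx hy
        exact .inr ⟨x, y, hxy, fun h => hZS (hx h), fun h => hZS (hy h)⟩
    obtain ⟨n, z, hz, h0, hn⟩ := exists_complete_altPath (G := G) (H := H) (I := A.names) (X := X)
      (p := fun x => P (φ x)) (q := fun x => P (ψ x))
      (fun x y h => by rw [hGφ X x y h, hP]) (fun x y h => by rw [hHψ X x y h, hP])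
      (fun x hx => by rw [hψ_mem x hx, hP]) (fun x hx => by rw [hψ_notMem x hx])
      hS
    exact ⟨_, n, z, hz, h0, hn, rfl⟩
  · rintro x y ⟨X, n, z, ⟨hn, -, hint, halt⟩, h0, hlast, he⟩ a b ha hb
    have hdual : φ (z 0) = bar (φ (z (n - 1))) := by
      rcases halt with halt | halt
      · exact eq_bar_of_alternating hbar (hGφ X) (hHψ X) hψ_mem hψ_notMem hn hint halt hlast
      · rw [← hψ_notMem _ h0, ← hψ_notMem _ hlast]
        exact eq_bar_of_alternating hbar (hHψ X) (hGφ X)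
          (fun x hx => by rw [hψ_mem x hx, hbar]) (fun x hx => (hψ_notMem x hx).symm)
          hn hint halt hlast
    rw [← hφΓ x a ha, ← hφΓ y b hb]
    rcases Sym2.eq_iff.1 he with ⟨rfl, rfl⟩ | ⟨rfl, rfl⟩
    · exact hdual
    · rw [hdual, hbar]
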